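/- Let θ be the linear functional on (P_4)_9 whose value is 1 on each of the four monomials x_1x_2^3x_3^3x_4^2, x_1x_2^3x_3^4x_4, x_1x_2^5x_3^2x_4, x_1x_2^6x_3x_4, and 0 on every other monomial of degree 9. Then θ vanishes on every hit polynomial of degree 9; equivalently, θ(Sq^t(g)) = 0 for every t > 0 and every g in (P_4)_{9−t}. -/

import Mathlib

open MvPolynomial

noncomputable section

abbrev kk : Type := ZMod 2
abbrev P4 : Type := MvPolynomial (Fin 4) kk

/-- The total Steenrod square: the algebra endomorphism of `P4` with `X i ↦ X i + (X i)^2`.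
For `g` homogeneous of degree `d`, `Sq^t g` is the degree-`d+t` homogeneous component
of `sqTotal g`. -/
def sqTotal : P4 →ₐ[kk] P4 := aeval fun i => X i + X i ^ 2

/-- The homogeneous polynomials of degree `n`, i.e. `(P_4)_n`, as a submodule. -/
def homog (n : ℕ) : Submodule kk P4 := homogeneousSubmodule (Fin 4) kk n

/-- The subspace `H_n` of hit polynomials of degree `n`: it is spanned by the elements
`Sq^{n-d}(g) = (sqTotal g)_n` for `g` homogeneous of degree `d < n`, i.e. by all
`∑_{t>0} Sq^t(f_t)` with `f_t ∈ (P_4)_{n-t}`. -/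
def hitSub (n : ℕ) : Submodule kk P4 :=
  Submodule.span kk
    {p | ∃ d, d < n ∧ ∃ g ∈ homog d, p = homogeneousComponent n (sqTotal g)}

/-- The exponent vector `(a, b, c, d)` of the monomial `x₁^a x₂^b x₃^c x₄^d`. -/
def ev (a b c d : ℕ) : Fin 4 →₀ ℕ := Finsupp.equivFunOnFinite.symm ![a, b, c, d]

def cc (n e : ℕ) : ℕ := if n ≤ e then Nat.choose n (e - n) else 0

theorem coeff_sq_aux (s e : Fin 4 →₀ ℕ) :
    coeff e (∏ i, ((X i + X i ^ 2 : P4)) ^ (s i)) = ((∏ i, cc (s i) (e i) : ℕ) : kk) := by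
  have h1 : ∀ i : Fin 4, ((X i + X i ^ 2 : P4)) ^ (s i) =
      ∑ k ∈ Finset.range (s i + 1),
        monomial (Finsupp.single i (s i + k)) ((Nat.choose (s i) k : ℕ) : kk) := by
    intro i
    have : (X i + X i ^ 2 : P4) = X i * (X i + 1) := by ring
    rw [this, mul_pow, add_pow, Finset.mul_sum]
    refine Finset.sum_congr rfl fun k _ => ?_
    rw [one_pow, mul_one, ← mul_assoc, ← pow_add, X_pow_eq_monomial,
      ← map_natCast (C : kk →+* P4), mul_comm, C_mul_monomial, mul_one]
  rw [Finset.prod_congr rfl fun i _ => h1 i, Finset.prod_univ_sum, coeff_sum]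
  have h2 : ∀ k : Fin 4 → ℕ, (∏ i, monomial (Finsupp.single i (s i + k i))
      ((Nat.choose (s i) (k i) : ℕ) : kk) : P4) =
      monomial (Finsupp.equivFunOnFinite.symm fun i => s i + k i)
        (((∏ i, Nat.choose (s i) (k i) : ℕ)) : kk) := by
    intro k
    rw [← monomial_sum_prod, Nat.cast_prod]
    congr 1
    rw [← Finsupp.univ_sum_single (Finsupp.equivFunOnFinite.symm fun i => s i + k i)]
    rfl
  rw [Finset.sum_congr rfl fun k _ => by rw [h2 k, coeff_monomial]]
  by_cases hle : ∀ i, s i ≤ e i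
  · have h3 : ∀ k : Fin 4 → ℕ,
        (Finsupp.equivFunOnFinite.symm fun i => s i + k i) = e ↔ k = fun i => e i - s i := by
      intro k
      constructor
      · intro h
        funext i
        have := DFunLike.congr_fun h i
        simp at this
        omega
      · rintro rfl
        ext i
        have := hle i
        simp
        omega
    simp only [h3]
    rw [Finset.sum_ite_eq']
    simp only [cc, hle, if_true]
    split_ifs with hm
    · rfl
    · rw [Fintype.mem_piFinset] at hm
      push Not at hm
      obtain ⟨i, hi⟩ := hm
      rw [Finset.prod_eq_zero (Finset.mem_univ i), Nat.cast_zero]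
      apply Nat.choose_eq_zero_of_lt
      simp at hi
      omega
  · push Not at hle
    obtain ⟨i, hi⟩ := hle
    rw [Finset.prod_eq_zero (Finset.mem_univ i) (by simp [cc]; omega), Nat.cast_zero]
    refine Finset.sum_eq_zero fun k _ => if_neg fun h => ?_
    have := DFunLike.congr_fun h i
    simp at this
    omega

theorem cc_zero {n e : ℕ} (h : e < n) : cc n e = 0 := by
  simp [cc]; omega

theorem fin_check : ∀ a < 2, ∀ b < 7, ∀ c < 5, ∀ d < 3, a + b + c + d < 9 →
    (cc a 1 * cc b 3 * cc c 3 * cc d 2 + cc a 1 * cc b 3 * cc c 4 * cc d 1 +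
     cc a 1 * cc b 5 * cc c 2 * cc d 1 + cc a 1 * cc b 6 * cc c 1 * cc d 1) % 2 = 0 := by
  decide +kernel

theorem nat_check (a b c d : ℕ) (h : a + b + c + d < 9) :
    (cc a 1 * cc b 3 * cc c 3 * cc d 2 + cc a 1 * cc b 3 * cc c 4 * cc d 1 +
     cc a 1 * cc b 5 * cc c 2 * cc d 1 + cc a 1 * cc b 6 * cc c 1 * cc d 1) % 2 = 0 := by
  by_cases ha : a < 2
  · by_cases hb : b < 7
    · by_cases hc : c < 5
      · by_cases hd : d < 3
        · exact fin_check a ha b hb c hc d hd h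
        · simp [cc_zero (show 2 < d by omega), cc_zero (show 1 < d by omega)]
      · simp [cc_zero (show 1 < c by omega), cc_zero (show 2 < c by omega),
          cc_zero (show 3 < c by omega), cc_zero (show 4 < c by omega)]
    · simp [cc_zero (show 3 < b by omega), cc_zero (show 5 < b by omega),
          cc_zero (show 6 < b by omega)]
  · simp [cc_zero (show 1 < a by omega)]

/-- The linear functional on `(P_4)_9` taking the value `1` exactly on the monomials
`x₁x₂³x₃³x₄²`, `x₁x₂³x₃⁴x₄`, `x₁x₂⁵x₃²x₄`, `x₁x₂⁶x₃x₄` vanishes on every hit polynomial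
of degree `9`. -/
theorem statement_16 :
    ∀ f ∈ hitSub 9,
      coeff (ev 1 3 3 2) f + coeff (ev 1 3 4 1) f + coeff (ev 1 5 2 1) f +
        coeff (ev 1 6 1 1) f = 0 := by
  intro f hf
  let L : P4 →ₗ[kk] kk := lcoeff kk (ev 1 3 3 2) + lcoeff kk (ev 1 3 4 1) +
    lcoeff kk (ev 1 5 2 1) + lcoeff kk (ev 1 6 1 1)
  have hL : ∀ f, L f = coeff (ev 1 3 3 2) f + coeff (ev 1 3 4 1) f + coeff (ev 1 5 2 1) f +
        coeff (ev 1 6 1 1) f := fun f => rfl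
  rw [← hL]
  suffices h : hitSub 9 ≤ LinearMap.ker L from h hf
  refine Submodule.span_le.2 ?_
  rintro _ ⟨d, hd, g, hg, rfl⟩
  change L _ = 0
  have hdeg : ∀ a b c d : ℕ, (ev a b c d).degree = a + b + c + d := by
    intro a b c d
    simp [Finsupp.degree_eq_sum, ev, Fin.sum_univ_four]
  rw [g.as_sum, map_sum, map_sum, map_sum]
  refine Finset.sum_eq_zero fun s hs => ?_
  have hsd : s 0 + s 1 + s 2 + s 3 = d := by
    have h := (mem_homogeneousSubmodule d g).1 hg (mem_support_iff.1 hs)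
    rw [← h, show Finsupp.weight 1 s = s.degree from (DFunLike.congr_fun Finsupp.degree_eq_weight_one s).symm,
      Finsupp.degree_eq_sum, Fin.sum_univ_four]
  have hsq : sqTotal (monomial s (coeff s g)) =
      coeff s g • ∏ i, ((X i + X i ^ 2 : P4)) ^ (s i) := by
    rw [sqTotal, aeval_monomial, Finsupp.prod_fintype _ _ (fun _ => pow_zero _),
      ← Algebra.smul_def]
  rw [hsq, map_smul, map_smul, hL]
  simp only [coeff_homogeneousComponent, hdeg, coeff_sq_aux]
  norm_num only [if_true]
  simp only [Fin.prod_univ_four]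
  have := nat_check (s 0) (s 1) (s 2) (s 3) (by omega)
  have h2 := (ZMod.natCast_eq_zero_iff _ 2).2 (Nat.dvd_of_mod_eq_zero this)
  push_cast at h2
  simp [ev]
  right
  exact h2

end
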